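/- arXiv:math/0601238 — 3 statements merged into one kernel-verified Lean document; each statement's English description precedes it below -/
import Mathlib

section
/- Let K be a field of characteristic zero and let A be an n×n matrix over K. Then in the formal power series ring K[[t]] one has the identity det(1 − t·A) · exp(∑_{m≥1} tr(A^m) t^m / m) = 1; equivalently, ∑_{m≥1} tr(A^m) t^m / m = − log det(1 − t·A). -/
/-- The formal exponential of a power series (with zero constant term),
defined coefficientwise: the `k`-th coefficient of `formalExp K f` is
`∑_{n ≤ k} coeff k (f ^ n) / n!`.  For `f` with zero constant term this is
exactly `exp f = ∑_{n ≥ 0} f ^ n / n!`, since `coeff k (f ^ n) = 0` for `n > k`. -/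
noncomputable def formalExp (K : Type*) [Field K] (f : PowerSeries K) : PowerSeries K :=
  PowerSeries.mk fun k =>
    ∑ n ∈ Finset.range (k + 1), (PowerSeries.coeff k (f ^ n)) / (n.factorial : K)


open PowerSeries in
theorem formalExp_eq_subst (K : Type*) [Field K] [CharZero K] (f : PowerSeries K)
    (hf : constantCoeff f = 0) : formalExp K f = (exp K).subst f := by
  have hs : HasSubst f := HasSubst.of_constantCoeff_zero' hf
  ext k
  rw [coeff_subst' hs, formalExp, coeff_mk, finsum_eq_sum_of_support_subset (s := Finset.range (k+1))]
  · refine Finset.sum_congr rfl fun n _ => ?_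
    simp [div_eq_inv_mul]
  · intro n hn
    by_contra h
    apply hn
    have hlt : k < n := by simpa [Nat.lt_succ_iff] using h
    have : coeff k (f ^ n) = 0 := by
      have hd : X ^ n ∣ f ^ n := pow_dvd_pow_of_dvd (X_dvd_iff.mpr hf) n
      exact X_pow_dvd_iff.mp hd k hlt
    simp [this]

open Polynomial in
theorem derivative_det_eq_trace {R : Type*} [CommRing R] {n : ℕ}
    (M : Matrix (Fin n) (Fin n) R[X]) :
    derivative M.det = Matrix.trace (M.adjugate * M.map derivative) := by
  have h1 : derivative M.det = ∑ i, (M.updateCol i (fun j => derivative (M j i))).det := by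
    simp only [Matrix.det_apply, map_sum]
    rw [Finset.sum_comm]
    refine Finset.sum_congr rfl fun σ _ => ?_
    rw [← Finset.smul_sum]
    have : derivative (Equiv.Perm.sign σ • ∏ i, M (σ i) i)
        = Equiv.Perm.sign σ • derivative (∏ i, M (σ i) i) := by
      rcases Int.units_eq_one_or (Equiv.Perm.sign σ) with h | h <;> simp [h]
    rw [this, derivative_prod_finset]
    congr 1
    refine Finset.sum_congr rfl fun i _ => ?_
    rw [← Finset.prod_erase_mul _ _ (Finset.mem_univ i)]
    congr 1
    · refine Finset.prod_congr rfl fun j hj => ?_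
      rw [Matrix.updateCol_ne (Finset.ne_of_mem_erase hj)]
    · simp
  rw [h1, Matrix.trace]
  refine Finset.sum_congr rfl fun i _ => ?_
  rw [← Matrix.cramer_apply, Matrix.cramer_eq_adjugate_mulVec]
  simp [Matrix.mulVec, Matrix.mul_apply, dotProduct]

open PowerSeries in
theorem derivative_charpolyRev_coe {K : Type*} [Field K] {n : ℕ}
    (A : Matrix (Fin n) (Fin n) K) :
    d⁄dX K ((Matrix.det (1 - (Polynomial.X : Polynomial K) • A.map Polynomial.C) :
        Polynomial K) : PowerSeries K) =
      - (((Matrix.det (1 - (Polynomial.X : Polynomial K) • A.map Polynomial.C) :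
        Polynomial K) : PowerSeries K) * PowerSeries.mk fun m => Matrix.trace (A ^ (m + 1))) := by
  set M : Matrix (Fin n) (Fin n) (Polynomial K) :=
    1 - (Polynomial.X : Polynomial K) • A.map Polynomial.C with hM
  let φ : Polynomial K →+* PowerSeries K := Polynomial.coeToPowerSeries.ringHom
  have hφ : ∀ p : Polynomial K, (p : PowerSeries K) = φ p := fun p => rfl
  have hd : M.map Polynomial.derivative = -(A.map Polynomial.C) := by
    ext1 i j
    by_cases h : i = j <;> simp [hM, h]
  let B : Matrix (Fin n) (Fin n) (PowerSeries K) :=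
    Matrix.of fun i j => PowerSeries.mk fun k => (A ^ k) i j
  have hAB : ∀ i j, (A.map (PowerSeries.C (R := K)) * B) i j =
      PowerSeries.mk fun k => (A ^ (k+1)) i j := by
    intro i j
    ext k
    simp [B, Matrix.mul_apply, pow_succ']
  have hMm : φ.mapMatrix M = 1 - (X : PowerSeries K) • A.map (PowerSeries.C (R := K)) := by
    ext1 i j
    by_cases h : i = j <;> simp [hM, h, φ] <;> exact mul_comm _ _
  have hMB : φ.mapMatrix M * B = 1 := by
    rw [hMm, sub_mul, one_mul, smul_mul_assoc]
    ext1 i j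
    rw [Matrix.sub_apply, Matrix.smul_apply, hAB]
    ext k
    cases k with
    | zero => by_cases h : i = j <;> simp [B, Matrix.one_apply, h]
    | succ k => by_cases h : i = j <;> simp [B, Matrix.one_apply, h, coeff_succ_X_mul, coeff_one]
  have hadj : φ.mapMatrix M.adjugate = φ M.det • B := by
    rw [RingHom.map_adjugate, RingHom.map_det]
    calc _ = (φ.mapMatrix M).adjugate * (φ.mapMatrix M * B) := by rw [hMB, mul_one]
      _ = _ := by rw [← mul_assoc, Matrix.adjugate_mul, smul_mul_assoc, one_mul]
  rw [derivative_coe, derivative_det_eq_trace, hd, hφ, hφ, AddMonoidHom.map_trace φ]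
  have : (M.adjugate * -(A.map Polynomial.C)).map φ = - (φ M.det • (B * A.map (PowerSeries.C (R := K)))) := by
    have h2 : φ.mapMatrix (-(A.map Polynomial.C)) = -(A.map (PowerSeries.C (R := K))) := by
      ext1 i j; simp [φ]
    change φ.mapMatrix _ = _
    rw [map_mul, hadj, h2, smul_mul_assoc, mul_neg, smul_neg]
  rw [this, Matrix.trace_neg, Matrix.trace_smul, Matrix.trace_mul_comm, smul_eq_mul]
  congr 2
  ext k
  simp [Matrix.trace, hAB]

/-- Let `K` be a field of characteristic zero and `A` an `n × n` matrix over `K`.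
Then in `K[[t]]` one has `det(1 - t • A) * exp (∑_{m ≥ 1} tr(A^m) t^m / m) = 1`,
where `det(1 - t • A)` is computed in `K[t]` and regarded as a power series. -/
theorem det_one_sub_smul_mul_exp_trace_pow_eq_one
    (K : Type*) [Field K] [CharZero K] (n : ℕ) (A : Matrix (Fin n) (Fin n) K) :
    ((Matrix.det (1 - (Polynomial.X : Polynomial K) • A.map Polynomial.C) :
        Polynomial K) : PowerSeries K) *
      formalExp K (PowerSeries.mk fun m =>
        if m = 0 then 0 else Matrix.trace (A ^ m) / (m : K)) = 1 := by
  set f : PowerSeries K := PowerSeries.mk fun m =>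
        if m = 0 then 0 else Matrix.trace (A ^ m) / (m : K) with hf
  have hf0 : PowerSeries.constantCoeff f = 0 := by
    rw [← PowerSeries.coeff_zero_eq_constantCoeff_apply]; simp [hf]
  have hs : PowerSeries.HasSubst f := PowerSeries.HasSubst.of_constantCoeff_zero' hf0
  have hdf : PowerSeries.derivative K f = PowerSeries.mk fun m => Matrix.trace (A ^ (m + 1)) := by
    ext k
    have : (k : K) + 1 ≠ 0 := by exact_mod_cast Nat.succ_ne_zero k
    simp [hf, PowerSeries.coeff_derivative, this]
  have hE0 : PowerSeries.constantCoeff (formalExp K f) = 1 := by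
    rw [← PowerSeries.coeff_zero_eq_constantCoeff_apply]; simp [formalExp]
  have hdE : PowerSeries.derivative K (formalExp K f) =
      formalExp K f * PowerSeries.derivative K f := by
    rw [formalExp_eq_subst K f hf0, PowerSeries.derivative_subst hs, PowerSeries.derivative_exp]
  apply PowerSeries.derivative.ext
  · rw [Derivation.leibniz, hdE, derivative_charpolyRev_coe, hdf]
    simp only [smul_eq_mul, PowerSeries.derivative_one]
    ring
  · rw [map_mul, hE0, mul_one, map_one, ← PowerSeries.coeff_zero_eq_constantCoeff_apply,
      Polynomial.coeff_coe, Polynomial.coeff_zero_eq_eval_zero]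
    exact Matrix.eval_charpolyRev (M := A)
end

section
/- Let N ≥ 1 and k ≥ 1 be integers, let χ be a Dirichlet character modulo N with values in ℂ, and let b : ℕ → ℂ satisfy: (i) b(1) = 1; (ii) b(mn) = b(m)·b(n) whenever gcd(m,n) = 1; (iii) for every prime p and every r ≥ 1, b(p^r)·b(p) = b(p^{r+1}) + χ(p)·p^{k−1}·b(p^{r−1}). Let s ∈ ℂ be such that ∑_{n≥1} |b(n)·n^{−s}| converges. Then the Dirichlet series ∑_{n≥1} b(n) n^{−s} converges to the Euler product over all primes, ∑_{n≥1} b(n) n^{−s} = ∏_p (1 − b(p) p^{−s} + χ(p) p^{k−1−2s})^{−1}, and this product converges. -/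
lemma aux_local (a : ℕ → ℂ) (u c : ℂ) (hS : Summable a) (e0 : a 0 = 1) (e1 : a 1 = u)
    (hrec : ∀ r : ℕ, a (r + 1 + 1) = u * a (r + 1) - c * a r) :
    (1 - u + c)⁻¹ = ∑' e, a e := by
  have hS1 : Summable (fun e => a (e + 1)) := (summable_nat_add_iff 1).2 hS
  have h0 := hS.tsum_eq_zero_add
  have h1 := hS1.tsum_eq_zero_add
  simp only [hrec] at h1
  rw [(hS1.mul_left _).tsum_sub (hS.mul_left _), tsum_mul_left, tsum_mul_left] at h1
  rw [e0] at h0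
  rw [zero_add, e1] at h1
  refine inv_eq_of_mul_eq_one_right ?_
  linear_combination (1 - u) * h0 + h1

/-- Let `χ` be a Dirichlet character mod `N` and `b : ℕ → ℂ` satisfy the Hecke relations:
`b 1 = 1`, `b` is multiplicative on coprime arguments, and
`b (p^r) * b p = b (p^(r+1)) + χ p * p^(k-1) * b (p^(r-1))` for every prime `p` and `r ≥ 1`.
If `∑_{n ≥ 1} |b n * n^(-s)|` converges, then the Dirichlet series `∑_{n ≥ 1} b n * n^(-s)`
equals the (convergent) Euler product
`∏_p (1 - b p * p^(-s) + χ p * p^(k-1-2s))⁻¹` over all primes `p`. -/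
theorem dirichlet_series_euler_product
    (N k : ℕ) (hN : 1 ≤ N) (hk : 1 ≤ k) (χ : DirichletCharacter ℂ N)
    (b : ℕ → ℂ) (hb1 : b 1 = 1)
    (hbmul : ∀ m n : ℕ, Nat.Coprime m n → b (m * n) = b m * b n)
    (hbrec : ∀ p : ℕ, p.Prime → ∀ r : ℕ, 1 ≤ r →
      b (p ^ r) * b p =
        b (p ^ (r + 1)) + χ (p : ZMod N) * (p : ℂ) ^ (k - 1) * b (p ^ (r - 1)))
    (s : ℂ)
    (hsum : Summable fun n : ℕ => ‖b (n + 1) * (((n : ℂ) + 1) ^ (-s))‖) :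
    HasProd (fun p : Nat.Primes =>
        (1 - b p * ((p : ℕ) : ℂ) ^ (-s) +
          χ ((p : ℕ) : ZMod N) * ((p : ℕ) : ℂ) ^ ((k : ℂ) - 1 - 2 * s))⁻¹)
      (∑' n : ℕ, b (n + 1) * (((n : ℂ) + 1) ^ (-s))) := by
  classical
  obtain ⟨f, hf⟩ : ∃ f : ℕ → ℂ, f = fun n => if n = 0 then 0 else b n * (n : ℂ) ^ (-s) := ⟨_, rfl⟩
  have hf0 : f 0 = 0 := by simp [hf]
  have hf1 : f 1 = 1 := by simp [hf, hb1]
  have hfs : ∀ n : ℕ, f (n + 1) = b (n + 1) * (((n : ℂ) + 1) ^ (-s)) := by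
    intro n; simp [hf]
  have hmul : ∀ {m n : ℕ}, Nat.Coprime m n → f (m * n) = f m * f n := by
    intro m n h
    by_cases hm : m = 0
    · simp [hf, hm]
    by_cases hn : n = 0
    · simp [hf, hn]
    simp only [hf, hm, hn, mul_eq_zero, or_self, if_false]
    rw [hbmul m n h, Nat.cast_mul, Complex.natCast_mul_natCast_cpow]
    ring
  have hsumf : Summable (‖f ·‖) := by
    rw [← summable_nat_add_iff 1]
    simpa only [hfs] using hsum
  have htsum : ∑' n, f n = ∑' n : ℕ, b (n + 1) * (((n : ℂ) + 1) ^ (-s)) := by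
    rw [hsumf.of_norm.tsum_eq_zero_add, hf0, zero_add]
    simp only [hfs]
  rw [← htsum]
  have key := EulerProduct.eulerProduct_hasProd hf1 hmul hsumf hf0
  convert key using 2 with p
  obtain ⟨p, hp⟩ := p
  simp only
  have hp0 : (p : ℂ) ≠ 0 := by exact_mod_cast hp.ne_zero
  set x : ℂ := (p : ℂ) ^ (-s) with hx
  have hpow : ∀ e : ℕ, f (p ^ e) = b (p ^ e) * x ^ e := by
    intro e
    simp only [hf, pow_eq_zero_iff', hp.ne_zero, false_and, if_false]
    rw [Nat.cast_pow, hx, ← Complex.natCast_cpow_natCast_mul, ← Complex.cpow_nat_mul]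
  have hc : (p : ℂ) ^ ((k : ℂ) - 1 - 2 * s) = (p : ℂ) ^ (k - 1) * x ^ 2 := by
    have : (k : ℂ) - 1 - 2 * s = ((k - 1 : ℕ) : ℂ) + (2 : ℕ) * (-s) := by
      push_cast [Nat.cast_sub hk]; ring
    rw [this, Complex.cpow_add _ _ hp0, Complex.cpow_natCast, Complex.cpow_nat_mul]
  have hS : Summable (fun e => f (p ^ e)) :=
    hsumf.of_norm.comp_injective (Nat.pow_right_injective hp.two_le)
  have hrec : ∀ r : ℕ, f (p ^ (r + 1 + 1)) = b p * x * f (p ^ (r + 1))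
      - χ (p : ZMod N) * (p : ℂ) ^ (k - 1) * x ^ 2 * f (p ^ r) := by
    intro r
    have := hbrec p hp (r + 1) (by omega)
    rw [Nat.add_sub_cancel] at this
    rw [hpow, hpow, hpow]
    linear_combination (-x ^ (r + 2)) * this
  have e0 : f (p ^ 0) = 1 := by rw [pow_zero, hf1]
  have e1 : f (p ^ 1) = b p * x := by rw [hpow, pow_one, pow_one]
  rw [hc, ← mul_assoc]
  exact aux_local (fun e => f (p ^ e)) _ _ hS e0 e1 hrec
end

section
/- Let ψ ∈ ℂ and let F_ψ ∈ ℂ[x_0,…,x_4] be the Dwork quintic F_ψ = x_0^5 + x_1^5 + x_2^5 + x_3^5 + x_4^5 − 5ψ·x_0x_1x_2x_3x_4. Then the origin is the only common zero in ℂ^5 of the five partial derivatives ∂F_ψ/∂x_i = 5x_i^4 − 5ψ·∏_{j≠i} x_j (i = 0,…,4) if and only if ψ^5 ≠ 1. Equivalently, the projective quintic hypersurface Q(ψ) = {F_ψ = 0} ⊂ P^4 is smooth if and only if ψ^5 ≠ 1. -/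
/-- For the Dwork quintic `F_ψ = x₀⁵ + ⋯ + x₄⁵ - 5ψ x₀x₁x₂x₃x₄`, the origin is the only
common zero in `ℂ⁵` of the five partial derivatives
`∂F_ψ/∂x_i = 5 x_i⁴ - 5 ψ ∏_{j ≠ i} x_j` if and only if `ψ⁵ ≠ 1`
(equivalently, the projective quintic `{F_ψ = 0} ⊂ ℙ⁴` is smooth iff `ψ⁵ ≠ 1`). -/
theorem dwork_quintic_smooth_iff (ψ : ℂ) :
    (∀ x : Fin 5 → ℂ,
        (∀ i : Fin 5, 5 * x i ^ 4 - 5 * ψ * ∏ j ∈ Finset.univ.erase i, x j = 0) → x = 0)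
      ↔ ψ ^ 5 ≠ 1 := by
  constructor
  · intro h hψ
    have hz := h (fun i => if i = 0 then ψ ^ 4 else 1) (by
      intro i
      by_cases hi : i = 0
      · subst hi
        have : ∏ j ∈ Finset.univ.erase (0 : Fin 5), (if j = 0 then ψ ^ 4 else (1 : ℂ)) = 1 :=
          Finset.prod_eq_one (fun j hj => by simp [Finset.ne_of_mem_erase hj])
        rw [this]
        simp only [if_true]
        linear_combination 5 * ψ * (ψ ^ 10 + ψ ^ 5 + 1) * hψ
      · have : ∏ j ∈ Finset.univ.erase i, (if j = 0 then ψ ^ 4 else (1 : ℂ)) = ψ ^ 4 := by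
          rw [Finset.prod_ite_eq' (Finset.univ.erase i) 0 (fun _ => ψ ^ 4)]
          simp [Ne.symm hi]
        rw [this]
        simp only [hi, if_false]
        linear_combination (-5) * hψ)
    have := congrFun hz 1
    simp at this
  · intro hψ x hx
    have h5 : ∀ i, x i ^ 5 = ψ * ∏ j, x j := by
      intro i
      rw [← Finset.mul_prod_erase Finset.univ x (Finset.mem_univ i)]
      linear_combination x i / 5 * hx i
    have hP : (∏ j, x j) ^ 5 = ψ ^ 5 * (∏ j, x j) ^ 5 := by
      calc (∏ j, x j) ^ 5 = ∏ i, x i ^ 5 := (Finset.prod_pow _ _ _).symm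
        _ = ∏ _i : Fin 5, (ψ * ∏ j, x j) := Finset.prod_congr rfl (fun i _ => h5 i)
        _ = _ := by rw [Finset.prod_const]; simp [mul_pow]
    have hP0 : ∏ j, x j = 0 := by
      have : (1 - ψ ^ 5) * (∏ j, x j) ^ 5 = 0 := by linear_combination hP
      rcases mul_eq_zero.mp this with h | h
      · exact absurd (sub_eq_zero.mp h).symm hψ
      · exact pow_eq_zero_iff (by norm_num) |>.mp h
    funext i
    have := h5 i
    rw [hP0, mul_zero] at this
    exact pow_eq_zero_iff (by norm_num) |>.mp this
end
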